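/- For every function f : ℝⁿ → [-∞,+∞], the lower semicontinuous level convex envelope of f equals the lower semicontinuous envelope of the level convex envelope of f, i.e. f^lslc = lsc(f^lc). -/

import Mathlib

open Set

/-- A function on `ℝⁿ` with values in a linear order is *level convex* if
`f (t ξ + (1-t) η) ≤ max (f ξ) (f η)` for all `ξ, η` and `t ∈ [0,1]`. -/
def LevelConvex {n : ℕ} {β : Type*} [LinearOrder β]
    (f : EuclideanSpace ℝ (Fin n) → β) : Prop :=
  ∀ ξ η : EuclideanSpace ℝ (Fin n), ∀ t ∈ Set.Icc (0 : ℝ) 1,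
    f (t • ξ + (1 - t) • η) ≤ max (f ξ) (f η)

/-- The lower semicontinuous envelope of `f : ℝⁿ → [-∞,+∞]`. -/
noncomputable def lscEnv {n : ℕ} (f : EuclideanSpace ℝ (Fin n) → EReal) :
    EuclideanSpace ℝ (Fin n) → EReal :=
  fun ξ => ⨆ (g : EuclideanSpace ℝ (Fin n) → EReal)
    (_ : LowerSemicontinuous g ∧ g ≤ f), g ξ

/-- The level convex envelope of `f : ℝⁿ → [-∞,+∞]`. -/
noncomputable def lcEnv {n : ℕ} (f : EuclideanSpace ℝ (Fin n) → EReal) :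
    EuclideanSpace ℝ (Fin n) → EReal :=
  fun ξ => ⨆ (g : EuclideanSpace ℝ (Fin n) → EReal)
    (_ : LevelConvex g ∧ g ≤ f), g ξ

/-- The lower semicontinuous level convex envelope of `f : ℝⁿ → [-∞,+∞]`. -/
noncomputable def lslcEnv {n : ℕ} (f : EuclideanSpace ℝ (Fin n) → EReal) :
    EuclideanSpace ℝ (Fin n) → EReal :=
  fun ξ => ⨆ (g : EuclideanSpace ℝ (Fin n) → EReal)
    (_ : LowerSemicontinuous g ∧ LevelConvex g ∧ g ≤ f), g ξ

/-!
A pointwise supremum of level convex functions is level convex, and likewise for lower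
semicontinuity, so the theorem amounts to: the lower semicontinuous envelope of a level convex
function `h` is level convex. Its sublevel set at height `c` is the intersection over `d > c` of the
closures of the sets `{h < d}`, and the closure of a convex set is convex.
-/

section LowerEnvelope

variable {α : Type*} [CompleteLattice α] {P Q : α → Prop} {a b : α}

/-- The envelope of `a` from below in the class of elements satisfying `P`, namely the supremum of
all such elements below `a`. Applied to a class of functions into a complete lattice, ordered
pointwise, it gives the envelopes of the theorem. When `P` is not closed under suprema, the envelope
itself may fail `P`. -/
def lowerEnvelope (P : α → Prop) (a : α) : α :=
  sSup {b | P b ∧ b ≤ a}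

lemma lowerEnvelope_le : lowerEnvelope P a ≤ a :=
  sSup_le fun _ hb => hb.2

lemma le_lowerEnvelope (hb : P b) (hba : b ≤ a) : b ≤ lowerEnvelope P a :=
  le_sSup ⟨hb, hba⟩

lemma lowerEnvelope_of_sSup (hP : ∀ s : Set α, (∀ b ∈ s, P b) → P (sSup s)) :
    P (lowerEnvelope P a) :=
  hP _ fun _ hb => hb.1

lemma lowerEnvelope_and_eq_lowerEnvelope_lowerEnvelope
    (hP : P (lowerEnvelope P (lowerEnvelope Q a)))
    (hQ : Q (lowerEnvelope P (lowerEnvelope Q a))) :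
    lowerEnvelope (fun b => P b ∧ Q b) a = lowerEnvelope P (lowerEnvelope Q a) :=
  le_antisymm
    (sSup_le fun _ ⟨⟨hPb, hQb⟩, hba⟩ => le_lowerEnvelope hPb (le_lowerEnvelope hQb hba))
    (le_lowerEnvelope ⟨hP, hQ⟩ (lowerEnvelope_le.trans lowerEnvelope_le))

lemma lowerEnvelope_apply {ι β : Type*} [CompleteLattice β] (P : (ι → β) → Prop) (f : ι → β)
    (i : ι) : lowerEnvelope P f i = ⨆ (g) (_ : P g ∧ g ≤ f), g i := by
  simp only [lowerEnvelope, sSup_eq_iSup, iSup_apply, mem_ofPred_eq]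

end LowerEnvelope

section LowerSemicontinuous

variable {X β : Type*} [TopologicalSpace X]

lemma lowerSemicontinuous_sSup [CompleteLinearOrder β] {F : Set (X → β)}
    (hF : ∀ g ∈ F, LowerSemicontinuous g) : LowerSemicontinuous (sSup F) := by
  convert lowerSemicontinuous_biSup hF
  simp only [sSup_eq_iSup, iSup_apply]

lemma lowerSemicontinuous_piecewise_bot [Preorder β] [OrderBot β] {C : Set X}
    [DecidablePred (· ∈ C)] {g : X → β} (hC : IsClosed C) (hg : LowerSemicontinuous g) :
    LowerSemicontinuous (C.piecewise ⊥ g) := by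
  intro x c hc
  have hx : x ∉ C := fun hx => by simp [hx] at hc
  rw [piecewise_eq_of_notMem _ _ _ hx] at hc
  filter_upwards [hC.isOpen_compl.mem_nhds hx, hg x c hc] with y hy hcy
  rwa [piecewise_eq_of_notMem _ _ _ hy]

lemma le_of_forall_mem_closure_preimage_Iio [LinearOrder β] {f g : X → β} {x : X} {c : β}
    (hg : LowerSemicontinuous g) (hgf : g ≤ f) (hx : ∀ d > c, x ∈ closure (f ⁻¹' Iio d)) :
    g x ≤ c := by
  by_contra! hlt
  -- When `c` is covered by `g x` there is no single separating value, only a separating pair.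
  obtain ⟨d, hcd, e, heg, hsep⟩ := hlt.exists_disjoint_Iio_Ioi
  obtain ⟨y, hey, hyd⟩ := mem_closure_iff_nhds.1 (hx d hcd) _ (hg x e heg)
  exact (hsep (f y) hyd (g y) hey).not_ge (hgf y)

variable [CompleteLinearOrder β] {f : X → β} {x : X} {c : β}

lemma mem_closure_of_lowerEnvelope_lowerSemicontinuous_lt
    (h : lowerEnvelope LowerSemicontinuous f x < c) : x ∈ closure (f ⁻¹' Iio c) := by
  classical
  by_contra hx
  -- The function equal to `⊥` on this closure and to `c` off it competes in the envelope.
  let g : X → β := (closure (f ⁻¹' Iio c)).piecewise ⊥ (fun _ => c)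
  have hg : LowerSemicontinuous g :=
    lowerSemicontinuous_piecewise_bot isClosed_closure lowerSemicontinuous_const
  have hgf : g ≤ f := piecewise_le (fun _ _ => bot_le)
    fun y hy => not_lt.1 fun hlt => hy (subset_closure hlt)
  have hgx : g x = c := piecewise_eq_of_notMem _ _ _ hx
  exact h.not_ge (hgx ▸ le_lowerEnvelope hg hgf x)

lemma preimage_Iic_lowerEnvelope_lowerSemicontinuous :
    lowerEnvelope LowerSemicontinuous f ⁻¹' Iic c = ⋂ d > c, closure (f ⁻¹' Iio d) := by
  ext x
  simp only [mem_iInter, mem_preimage, mem_Iic]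
  refine ⟨fun hx d hd => mem_closure_of_lowerEnvelope_lowerSemicontinuous_lt (hx.trans_lt hd),
    le_of_forall_mem_closure_preimage_Iio ?_ lowerEnvelope_le⟩
  exact lowerEnvelope_of_sSup fun _ => lowerSemicontinuous_sSup

end LowerSemicontinuous

section Quasiconvex

variable {𝕜 E β : Type*}

lemma quasiconvexOn_sSup [Semiring 𝕜] [PartialOrder 𝕜] [AddCommMonoid E] [SMul 𝕜 E]
    [CompleteLattice β] {s : Set E} {F : Set (E → β)} (hs : Convex 𝕜 s)
    (hF : ∀ g ∈ F, QuasiconvexOn 𝕜 s g) : QuasiconvexOn 𝕜 s (sSup F) := by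
  intro r
  have hsublevel : {x ∈ s | sSup F x ≤ r} = s ∩ ⋂ g ∈ F, {x ∈ s | g x ≤ r} := by
    ext x
    simp +contextual [sSup_apply]
  rw [hsublevel]
  exact hs.inter (convex_iInter₂ fun g hg => hF g hg r)

variable [Field 𝕜] [PartialOrder 𝕜] [AddCommGroup E] [TopologicalSpace E] [IsTopologicalAddGroup E]
  [Module 𝕜 E] [ContinuousConstSMul 𝕜 E] [CompleteLinearOrder β]

lemma quasiconvexOn_lowerEnvelope_lowerSemicontinuous {f : E → β} (hf : QuasiconvexOn 𝕜 univ f) :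
    QuasiconvexOn 𝕜 univ (lowerEnvelope LowerSemicontinuous f) := by
  refine convex_univ.quasiconvexOn_of_convex_le fun c => ?_
  change Convex 𝕜 (lowerEnvelope LowerSemicontinuous f ⁻¹' Iic c)
  rw [preimage_Iic_lowerEnvelope_lowerSemicontinuous]
  have hlt (d : β) : Convex 𝕜 (f ⁻¹' Iio d) := by
    simpa only [mem_univ, true_and] using! hf.convex_lt d
  exact convex_iInter₂ fun d _ => (hlt d).closure

theorem lslcEnv_eq_lscEnv_lcEnv_general (f : E → β) :
    lowerEnvelope (fun g => LowerSemicontinuous g ∧ QuasiconvexOn 𝕜 univ g) f =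
      lowerEnvelope LowerSemicontinuous (lowerEnvelope (QuasiconvexOn 𝕜 univ) f) :=
  lowerEnvelope_and_eq_lowerEnvelope_lowerEnvelope
    (lowerEnvelope_of_sSup fun _ => lowerSemicontinuous_sSup)
    (quasiconvexOn_lowerEnvelope_lowerSemicontinuous
      (lowerEnvelope_of_sSup fun _ => quasiconvexOn_sSup convex_univ))

end Quasiconvex

section EuclideanSpace

variable {n : ℕ}

lemma levelConvex_iff_quasiconvexOn {β : Type*} [LinearOrder β]
    {f : EuclideanSpace ℝ (Fin n) → β} : LevelConvex f ↔ QuasiconvexOn ℝ univ f := by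
  rw [quasiconvexOn_iff_le_max]
  constructor
  · intro hf
    refine ⟨convex_univ, fun x _ y _ a b ha hb hab => ?_⟩
    obtain rfl : b = 1 - a := by linarith
    exact hf x y a ⟨ha, sub_nonneg.1 hb⟩
  · rintro ⟨-, hf⟩ x y t ⟨ht₀, ht₁⟩
    exact hf (mem_univ x) (mem_univ y) ht₀ (sub_nonneg.2 ht₁) (add_sub_cancel t 1)

variable (f : EuclideanSpace ℝ (Fin n) → EReal)

lemma lscEnv_eq_lowerEnvelope : lscEnv f = lowerEnvelope LowerSemicontinuous f :=
  funext fun x => (lowerEnvelope_apply _ f x).symm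

lemma lcEnv_eq_lowerEnvelope : lcEnv f = lowerEnvelope (QuasiconvexOn ℝ univ) f := by
  ext x
  simp only [lcEnv, lowerEnvelope_apply, levelConvex_iff_quasiconvexOn]

lemma lslcEnv_eq_lowerEnvelope :
    lslcEnv f = lowerEnvelope (fun g => LowerSemicontinuous g ∧ QuasiconvexOn ℝ univ g) f := by
  ext x
  simp only [lslcEnv, lowerEnvelope_apply, levelConvex_iff_quasiconvexOn, and_assoc]

end EuclideanSpace

/-- For every `f : ℝⁿ → [-∞,+∞]` one has `f^lslc = lsc (f^lc)`. -/
theorem lslcEnv_eq_lscEnv_lcEnv {n : ℕ} (f : EuclideanSpace ℝ (Fin n) → EReal) :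
    lslcEnv f = lscEnv (lcEnv f) := by
  rw [lslcEnv_eq_lowerEnvelope, lscEnv_eq_lowerEnvelope, lcEnv_eq_lowerEnvelope,
    lslcEnv_eq_lscEnv_lcEnv_general]
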